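/- (Corollary C, sine version) Let μ ≥ 1 be an odd integer, j ∈ ℕ, and ϑ, φ ∈ [0,π] with cos ϑ + cos φ > 0. Set a = sin ϑ/(cos ϑ + cos φ) and b = sin φ/(cos ϑ + cos φ). Then ∫₀^∞ L_j^μ(2x) J̃_{μ/2}(ax) sin(bx) x^μ e^{−x} dx = (−1)^j · (2^μ/√π) · ((cos ϑ + cos φ)/2)^{(μ+1)/2} · sin((j+(μ+1)/2)φ) · C̃_j^{(μ+1)/2}(cos ϑ). -/

import Mathlib

open MeasureTheory Real Filter Set Metric

noncomputable section

/-- Normalized Bessel function of the first kind: `J̃_α(x) = (x/2)^{-α} J_α(x)`,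
given by its (entire) power series. -/
def besselJt (α x : ℝ) : ℝ :=
  ∑' m : ℕ, (-1) ^ m / (m.factorial * Real.Gamma (m + α + 1)) * (x / 2) ^ (2 * m)

/-- Bessel function of the first kind `J_α`. -/
def besselJ (α x : ℝ) : ℝ :=
  ∑' m : ℕ, (-1) ^ m / (m.factorial * Real.Gamma (m + α + 1)) * (x / 2) ^ (2 * (m : ℝ) + α)

/-- Normalized modified Bessel function `Ĩ_α(x) = (x/2)^{-α} I_α(x)`,
given by its (entire, even) power series. -/
def besselIt (α x : ℝ) : ℝ :=
  ∑' m : ℕ, (x / 2) ^ (2 * m) / (m.factorial * Real.Gamma (m + α + 1))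

/-- Modified Bessel function of the first kind `I_α`. -/
def besselI (α x : ℝ) : ℝ :=
  ∑' m : ℕ, (x / 2) ^ (2 * (m : ℝ) + α) / (m.factorial * Real.Gamma (m + α + 1))

/-- Modified Bessel function of the second kind,
`K_α(x) = lim_{β→α} (π/2)(I_{−β}(x) − I_β(x))/sin(βπ)`. -/
def besselK (α x : ℝ) : ℝ :=
  limUnder (nhdsWithin α {α}ᶜ) fun β =>
    Real.pi / 2 * (besselI (-β) x - besselI β x) / Real.sin (β * Real.pi)

/-- Normalized K-Bessel function `K̃_α(x) = (x/2)^{-α} K_α(x)`. -/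
def besselKt (α x : ℝ) : ℝ := (x / 2) ^ (-α) * besselK α x

/-- Normalized Gegenbauer polynomial `C̃_n^λ = Γ(λ) C_n^λ`, where `C_n^λ` is defined via the
generating function `(1 − 2xt + t²)^{−λ} = Σ_{n≥0} C_n^λ(x) tⁿ`; explicitly,
`C̃_n^λ(x) = Σ_{k=0}^{⌊n/2⌋} (−1)^k Γ(λ+n−k)/(k!(n−2k)!) (2x)^{n−2k}`.
This expression also gives the limit value `C̃_n^0 = lim_{λ→0+} Γ(λ) C_n^λ` for `n ≥ 1`. -/
def gegenbauerCt (n : ℕ) (l x : ℝ) : ℝ :=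
  ∑ k ∈ Finset.range (n / 2 + 1),
    (-1) ^ k * Real.Gamma (l + n - k) / (k.factorial * (n - 2 * k).factorial)
      * (2 * x) ^ (n - 2 * k)

/-- Laguerre polynomial `L_n^μ(x) = Σ_{k=0}^n (−1)^k binom(n+μ, n−k) x^k/k!`
(with nonnegative integer parameter `μ`). -/
def laguerreL (n μ : ℕ) (x : ℝ) : ℝ :=
  ∑ k ∈ Finset.range (n + 1),
    (-1) ^ k * (Nat.choose (n + μ) (n - k)) * x ^ k / k.factorial

/-- The Euler operator `θ = x d/dx`. -/
def eulerOp (u : ℝ → ℝ) : ℝ → ℝ := fun x => x * deriv u x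

/-- `(θ+c)(θ+c+ν)u − x² u`, i.e. the operator `Q_ν(θ+c)` applied to `u`. -/
def besselQ (ν c : ℝ) (u : ℝ → ℝ) : ℝ → ℝ := fun x =>
  eulerOp (fun y => eulerOp u y + (c + ν) * u y) x
    + c * (eulerOp u x + (c + ν) * u x) - x ^ 2 * u x

/-- The fourth order differential operator
`D_{μ,ν} = x^{−2}((θ+μ)(θ+μ+ν) − x²)(θ(θ+ν) − x²)`. -/
def Dop (μ ν : ℝ) (u : ℝ → ℝ) : ℝ → ℝ := fun x =>
  besselQ ν μ (besselQ ν 0 u) x / x ^ 2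

/-- The generating function
`G^{μ,ν}(t,x) = (1−t)^{−(μ+ν+2)/2} Ĩ_{μ/2}(tx/(1−t)) K̃_{ν/2}(x/(1−t))`. -/
def genFun (μ ν t x : ℝ) : ℝ :=
  (1 - t) ^ (-(μ + ν + 2) / 2) * besselIt (μ / 2) (t * x / (1 - t))
    * besselKt (ν / 2) (x / (1 - t))

/-- The eigenfunctions `Λ_j^{μ,ν}`, defined as the Taylor coefficients in `t` at `t = 0` of the
generating function `G^{μ,ν}(t,x) = Σ_{j≥0} Λ_j^{μ,ν}(x) t^j`. -/
def LambdaF (μ ν : ℝ) (j : ℕ) (x : ℝ) : ℝ :=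
  iteratedDeriv j (fun t => genFun μ ν t x) 0 / j.factorial

/-- The integrality condition: `μ ≥ ν ≥ −1` are integers of the same parity,
not both equal to `−1`. -/
def IntCond (μ ν : ℤ) : Prop :=
  -1 ≤ ν ∧ ν ≤ μ ∧ Even (μ - ν) ∧ ¬(μ = -1 ∧ ν = -1)

end

/-!
The derivative formula and the recurrence of `J̃_α` turn into a first-order differential equation
for the Laplace transform of `x^{2α} J̃_α(ax)`, whose solution is a constant times
`(p² + a²)^{-(α + 1/2)}`. Multiplying by `L_j^μ(2x)` and summing against `tʲ` replaces `p` by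
`p + 2t/(1 - t)`, by the generating function of the Laguerre polynomials. At `p = 1 - ib` and
`α = μ/2` the result is, up to a constant and the factor `((cos ϑ + cos φ)/2 · e^{iφ})^{(μ+1)/2}`,
the generating function of the Gegenbauer polynomials at `-t e^{iφ}`. The identity is the imaginary
part of the comparison of the coefficients of `tʲ`.
-/

/-! ### Normalized Bessel functions -/

/-- Coefficients of the Bessel–Clifford function. At the poles of `Γ`, where Mathlib has `Γ = 0`,
the value `1 / 0 = 0` is the right one. -/
noncomputable def besselCliffordCoeff (α : ℝ) (m : ℕ) : ℝ :=
  1 / (m.factorial * Real.Gamma (m + α + 1))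

/-- The Bessel–Clifford function `w ↦ ∑ wᵐ / (m! Γ(m + α + 1))`, an entire function in terms of
which `J̃_α(z)` is the value at `-(z / 2)²` and differentiation is the shift `α ↦ α + 1`. -/
noncomputable def besselClifford (α w : ℝ) : ℝ := ∑' m : ℕ, besselCliffordCoeff α m * w ^ m

lemma besselCliffordCoeff_eq_mul_add_one (α : ℝ) (m : ℕ) :
    besselCliffordCoeff α m = (m + α + 1) * besselCliffordCoeff (α + 1) m := by
  rw [besselCliffordCoeff, besselCliffordCoeff, ← add_assoc (m : ℝ) α 1]
  rcases eq_or_ne ((m : ℝ) + α + 1) 0 with h | h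
  · simp [h, Real.Gamma_zero]
  · rw [Real.Gamma_add_one h, mul_left_comm, mul_one_div, div_mul_cancel_left₀ h, one_div]

lemma succ_mul_besselCliffordCoeff_succ (α : ℝ) (m : ℕ) :
    (m + 1) * besselCliffordCoeff α (m + 1) = besselCliffordCoeff (α + 1) m := by
  rw [besselCliffordCoeff, besselCliffordCoeff, Nat.factorial_succ, Nat.cast_mul, Nat.cast_succ,
    mul_assoc, mul_one_div, div_mul_cancel_left₀ m.cast_add_one_ne_zero, one_div,
    show (m : ℝ) + 1 + α + 1 = m + (α + 1) + 1 by ring]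

lemma summable_besselClifford (α w : ℝ) :
    Summable fun m => besselCliffordCoeff α m * w ^ m := by
  refine summable_of_ratio_norm_eventually_le (r := 1 / 2) (by norm_num) ?_
  have hlarge : Tendsto (fun m : ℕ => (m : ℝ)) atTop atTop := tendsto_natCast_atTop_atTop
  filter_upwards [hlarge.eventually_ge_atTop (2 * |w|), hlarge.eventually_ge_atTop (-α)]
    with m hw hα
  have hcoeff : besselCliffordCoeff α m
      = (m + α + 1) * (m + 1) * besselCliffordCoeff α (m + 1) := by
    rw [mul_assoc, succ_mul_besselCliffordCoeff_succ, besselCliffordCoeff_eq_mul_add_one]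
  have hgrowth : 2 * |w| ≤ |((m : ℝ) + α + 1) * (m + 1)| := by
    have hone : 1 ≤ (m : ℝ) + α + 1 := by linarith
    refine le_trans ?_ (le_abs_self _)
    linarith [le_mul_of_one_le_left m.cast_add_one_pos.le hone]
  rw [hcoeff, pow_succ, Real.norm_eq_abs, Real.norm_eq_abs, abs_mul, abs_mul, abs_mul, abs_mul]
  calc |besselCliffordCoeff α (m + 1)| * (|w ^ m| * |w|)
      = 1 / 2 * (2 * |w| * |besselCliffordCoeff α (m + 1)| * |w ^ m|) := by ring
    _ ≤ _ := by gcongr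

lemma hasDerivAt_besselClifford (α w : ℝ) :
    HasDerivAt (besselClifford α) (besselClifford (α + 1) w) w := by
  have hshift (v : ℝ) (m : ℕ) : besselCliffordCoeff α (m + 1) * ((m + 1 : ℕ) * v ^ (m + 1 - 1))
      = besselCliffordCoeff (α + 1) m * v ^ m := by
    rw [← succ_mul_besselCliffordCoeff_succ, Nat.add_sub_cancel]
    push_cast
    ring
  have hbound : Summable fun m : ℕ => |besselCliffordCoeff α m| * (m * (|w| + 1) ^ (m - 1)) := by
    refine (summable_nat_add_iff 1).1 ((summable_besselClifford (α + 1) (|w| + 1)).abs.congr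
      fun m => ?_)
    rw [← hshift, abs_mul]
    congr 1
    exact abs_of_nonneg (by positivity)
  have hderiv := hasDerivAt_tsum_of_isPreconnected hbound isOpen_ball
    (convex_ball (0 : ℝ) (|w| + 1)).isPreconnected
    (fun m v _ => (hasDerivAt_pow m v).const_mul (besselCliffordCoeff α m))
    (fun m v hv => ?_) (mem_ball_self (by positivity)) (summable_besselClifford α 0)
    (y := w) (by simp)
  · refine hderiv.congr_deriv ?_
    have hsum : Summable fun m : ℕ => besselCliffordCoeff α m * (m * w ^ (m - 1)) :=
      (summable_nat_add_iff 1).1 ((summable_besselClifford (α + 1) w).congr fun m =>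
        (hshift w m).symm)
    rw [hsum.tsum_eq_zero_add, Nat.cast_zero, zero_mul, mul_zero, zero_add, besselClifford]
    exact tsum_congr fun m => hshift w m
  · have hv' : |v| ≤ |w| + 1 := (mem_ball_zero_iff.1 hv).le
    rw [norm_mul, norm_mul, norm_pow, Real.norm_natCast, Real.norm_eq_abs, Real.norm_eq_abs]
    gcongr

lemma besselClifford_recurrence (α w : ℝ) :
    besselClifford α w = (α + 1) * besselClifford (α + 1) w + w * besselClifford (α + 2) w := by
  have hcoeff (m : ℕ) : besselCliffordCoeff α m * w ^ m
      = (α + 1) * (besselCliffordCoeff (α + 1) m * w ^ m)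
        + m * besselCliffordCoeff (α + 1) m * w ^ m := by
    rw [besselCliffordCoeff_eq_mul_add_one α]
    ring
  have hshift (m : ℕ) : (m + 1 : ℕ) * besselCliffordCoeff (α + 1) (m + 1) * w ^ (m + 1)
      = w * (besselCliffordCoeff (α + 2) m * w ^ m) := by
    rw [Nat.cast_succ, succ_mul_besselCliffordCoeff_succ, add_assoc α, one_add_one_eq_two, pow_succ]
    ring
  have hfirst := (summable_besselClifford (α + 1) w).mul_left (α + 1)
  have hsecond : Summable fun m : ℕ => m * besselCliffordCoeff (α + 1) m * w ^ m :=
    (summable_nat_add_iff 1).1 (((summable_besselClifford (α + 2) w).mul_left w).congr fun m =>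
      (hshift m).symm)
  rw [besselClifford, tsum_congr hcoeff, hfirst.tsum_add hsecond, tsum_mul_left,
    hsecond.tsum_eq_zero_add, tsum_congr hshift, tsum_mul_left, Nat.cast_zero, zero_mul, zero_mul,
    zero_add, besselClifford, besselClifford]

lemma besselJt_eq_besselClifford (α z : ℝ) : besselJt α z = besselClifford α (-(z / 2) ^ 2) := by
  refine tsum_congr fun m => ?_
  rw [besselCliffordCoeff, neg_pow ((z / 2) ^ 2), pow_mul]
  ring

lemma besselJt_zero_right (α : ℝ) : besselJt α 0 = 1 / Real.Gamma (α + 1) := by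
  rw [besselJt, tsum_eq_single 0 fun m hm => by simp [hm]]
  simp

lemma besselJt_neg (α z : ℝ) : besselJt α (-z) = besselJt α z := by
  rw [besselJt_eq_besselClifford, besselJt_eq_besselClifford, neg_div, neg_sq]

lemma hasDerivAt_besselJt (α z : ℝ) :
    HasDerivAt (besselJt α) (-(z / 2) * besselJt (α + 1) z) z := by
  have hsq : HasDerivAt (fun y : ℝ => -(y / 2) ^ 2) (-(z / 2)) z :=
    (((hasDerivAt_id z).div_const 2).pow 2).neg.congr_deriv <| by
      simp only [id]
      ring
  refine ((hasDerivAt_besselClifford α _).comp z hsq).congr_deriv ?_ |>.congr_of_eventuallyEq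
    (.of_forall (besselJt_eq_besselClifford α))
  rw [besselJt_eq_besselClifford, mul_comm]

lemma continuous_besselJt (α : ℝ) : Continuous (besselJt α) :=
  continuous_iff_continuousAt.2 fun z => (hasDerivAt_besselJt α z).continuousAt

lemma besselJt_recurrence (α z : ℝ) :
    besselJt α z = (α + 1) * besselJt (α + 1) z - (z / 2) ^ 2 * besselJt (α + 2) z := by
  simp only [besselJt_eq_besselClifford]
  linear_combination besselClifford_recurrence α (-(z / 2) ^ 2)

lemma antitoneOn_besselJt_energy {α : ℝ} (hα : -1 / 2 ≤ α) :
    AntitoneOn (fun z => besselJt α z ^ 2 + (z / 2 * besselJt (α + 1) z) ^ 2) (Ici 0) := by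
  have hderiv (z : ℝ) : HasDerivAt (fun z => besselJt α z ^ 2 + (z / 2 * besselJt (α + 1) z) ^ 2)
      (-((α + 1 / 2) * z * besselJt (α + 1) z ^ 2)) z := by
    have hJ := hasDerivAt_besselJt α z
    have hJ' := ((hasDerivAt_id z).div_const 2).mul (hasDerivAt_besselJt (α + 1) z)
    refine ((hJ.pow 2).add (hJ'.pow 2)).congr_deriv ?_
    have hrec := besselJt_recurrence α z
    rw [add_assoc α 1 1, one_add_one_eq_two]
    simp only [id, Nat.cast_ofNat, Nat.add_one_sub_one, pow_one, Pi.mul_apply]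
    linear_combination -z * besselJt (α + 1) z * hrec
  refine antitoneOn_of_hasDerivWithinAt_nonpos (convex_Ici 0)
    (fun z _ => (hderiv z).continuousAt.continuousWithinAt)
    (fun z _ => (hderiv z).hasDerivWithinAt) fun z hz => ?_
  have hz : 0 < z := by simpa using hz
  have : 0 ≤ α + 1 / 2 := by linarith
  exact neg_nonpos.2 (by positivity)

lemma abs_besselJt_le {α : ℝ} (hα : -1 / 2 ≤ α) (z : ℝ) :
    |besselJt α z| ≤ 1 / Real.Gamma (α + 1) := by
  wlog hz : 0 ≤ z generalizing z
  · rw [← besselJt_neg]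
    exact this (-z) (by linarith)
  have henergy : besselJt α z ^ 2 + (z / 2 * besselJt (α + 1) z) ^ 2
      ≤ besselJt α 0 ^ 2 + (0 / 2 * besselJt (α + 1) 0) ^ 2 :=
    antitoneOn_besselJt_energy hα self_mem_Ici hz hz
  have hΓ : 0 < Real.Gamma (α + 1) := Real.Gamma_pos_of_pos (by linarith)
  rw [besselJt_zero_right] at henergy
  refine abs_le_of_sq_le_sq (?_ : besselJt α z ^ 2 ≤ (1 / Real.Gamma (α + 1)) ^ 2) (by positivity)
  nlinarith [sq_nonneg (z / 2 * besselJt (α + 1) z)]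

/-! ### Laplace transforms -/

/-- The Laplace transform `p ↦ ∫₀^∞ f(x) e^{-px} dx` of a real function, at complex arguments. -/
noncomputable def laplaceTransform (f : ℝ → ℝ) (p : ℂ) : ℂ :=
  ∫ x in Ioi (0 : ℝ), (f x : ℂ) * Complex.exp (-p * x)

/-- The integral defining the Laplace transform of `f` converges absolutely on the half-plane
`0 < re p`. -/
def LaplaceIntegrable (f : ℝ → ℝ) : Prop :=
  ∀ s > 0, IntegrableOn (fun x => f x * Real.exp (-(s * x))) (Ioi 0)

lemma norm_ofReal_mul_cexp_neg_mul (y : ℝ) (p : ℂ) (x : ℝ) :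
    ‖(y : ℂ) * Complex.exp (-p * x)‖ = |y| * Real.exp (-(p.re * x)) := by
  simp [Complex.norm_exp]

namespace LaplaceIntegrable

variable {f g : ℝ → ℝ}

lemma aestronglyMeasurable (hf : LaplaceIntegrable f) :
    AEStronglyMeasurable f (volume.restrict (Ioi 0)) := by
  have hexp : Continuous fun x : ℝ => Real.exp (1 * x) := by fun_prop
  refine ((hf 1 one_pos).aestronglyMeasurable.mul hexp.aestronglyMeasurable).congr
    (.of_forall fun x => ?_)
  simp [mul_assoc, ← Real.exp_add]

lemma aestronglyMeasurable_ofReal (hf : LaplaceIntegrable f) :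
    AEStronglyMeasurable (fun x => (f x : ℂ)) (volume.restrict (Ioi 0)) :=
  Complex.continuous_ofReal.comp_aestronglyMeasurable hf.aestronglyMeasurable

lemma integrableOn (hf : LaplaceIntegrable f) {p : ℂ} (hp : 0 < p.re) :
    IntegrableOn (fun x : ℝ => (f x : ℂ) * Complex.exp (-p * x)) (Ioi 0) := by
  have hexp : Continuous fun x : ℝ => Complex.exp (-p * x) := by fun_prop
  refine Integrable.mono (hf p.re hp) (hf.aestronglyMeasurable_ofReal.mul
    hexp.aestronglyMeasurable) (.of_forall fun x => ?_)
  rw [norm_ofReal_mul_cexp_neg_mul, norm_mul, Real.norm_eq_abs,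
    Real.norm_of_nonneg (Real.exp_nonneg _)]

lemma const_mul (hf : LaplaceIntegrable f) (c : ℝ) : LaplaceIntegrable fun x => c * f x :=
  fun s hs => by simpa only [IntegrableOn, mul_assoc] using (hf s hs).const_mul c

lemma sub (hf : LaplaceIntegrable f) (hg : LaplaceIntegrable g) :
    LaplaceIntegrable fun x => f x - g x :=
  fun s hs => ((hf s hs).sub (hg s hs)).congr (.of_forall fun _ => (sub_mul _ _ _).symm)

lemma id_mul (hf : LaplaceIntegrable f) : LaplaceIntegrable fun x => x * f x := by
  intro s hs
  have hexp : Continuous fun x : ℝ => Real.exp (-(s * x)) := by fun_prop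
  refine ((hf (s / 2) (half_pos hs)).const_mul (2 / s)).mono ((aestronglyMeasurable_id.mul
    hf.aestronglyMeasurable).mul hexp.aestronglyMeasurable)
    ((ae_restrict_mem measurableSet_Ioi).mono fun x hx => ?_)
  have hx : 0 < x := hx
  have hlin : x ≤ 2 / s * Real.exp (s / 2 * x) := by
    rw [div_mul_eq_mul_div, le_div_iff₀ hs]
    linarith [Real.add_one_le_exp (s / 2 * x)]
  rw [norm_mul, norm_mul, norm_mul, norm_mul, Real.norm_of_nonneg hx.le,
    Real.norm_of_nonneg (Real.exp_nonneg _), Real.norm_of_nonneg (Real.exp_nonneg _),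
    Real.norm_of_nonneg (div_pos two_pos hs).le]
  calc x * ‖f x‖ * Real.exp (-(s * x))
      ≤ 2 / s * Real.exp (s / 2 * x) * ‖f x‖ * Real.exp (-(s * x)) := by gcongr
    _ = 2 / s * (‖f x‖ * (Real.exp (s / 2 * x) * Real.exp (-(s * x)))) := by ring
    _ = 2 / s * (‖f x‖ * Real.exp (-(s / 2 * x))) := by
      rw [← Real.exp_add, show s / 2 * x + -(s * x) = -(s / 2 * x) by ring]

lemma pow_mul (hf : LaplaceIntegrable f) (n : ℕ) :
    LaplaceIntegrable fun x => x ^ n * f x := by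
  induction n with
  | zero => simpa using hf
  | succ n ih => simpa only [pow_succ', mul_assoc] using ih.id_mul

lemma of_abs_le_rpow {r C : ℝ} (hr : -1 < r)
    (hmeas : AEStronglyMeasurable f (volume.restrict (Ioi 0)))
    (hle : ∀ x > 0, |f x| ≤ C * x ^ r) : LaplaceIntegrable f := by
  intro s hs
  have hexp : Continuous fun x : ℝ => Real.exp (-(s * x)) := by fun_prop
  have hrpow := (integrableOn_rpow_mul_exp_neg_mul_rpow hr one_pos hs).const_mul C
  simp only [Real.rpow_one] at hrpow
  refine hrpow.mono' (hmeas.mul hexp.aestronglyMeasurable)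
    ((ae_restrict_mem measurableSet_Ioi).mono fun x hx => ?_)
  rw [norm_mul, Real.norm_of_nonneg (Real.exp_nonneg _), neg_mul, ← mul_assoc]
  exact mul_le_mul_of_nonneg_right (hle x hx) (Real.exp_nonneg _)

end LaplaceIntegrable

section laplaceTransform

variable {f g : ℝ → ℝ} {p : ℂ}

lemma laplaceTransform_congr (hfg : EqOn f g (Ioi 0)) :
    laplaceTransform f = laplaceTransform g := by
  funext p
  exact setIntegral_congr_fun measurableSet_Ioi fun x hx => by simp only [hfg hx]

lemma laplaceTransform_const_mul (c : ℝ) :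
    laplaceTransform (fun x => c * f x) p = c * laplaceTransform f p := by
  rw [laplaceTransform, laplaceTransform, ← integral_const_mul]
  simp only [Complex.ofReal_mul, mul_assoc]

lemma laplaceTransform_sub (hf : LaplaceIntegrable f) (hg : LaplaceIntegrable g) (hp : 0 < p.re) :
    laplaceTransform (fun x => f x - g x) p = laplaceTransform f p - laplaceTransform g p := by
  rw [laplaceTransform, laplaceTransform, laplaceTransform,
    ← integral_sub (hf.integrableOn hp) (hg.integrableOn hp)]
  simp only [Complex.ofReal_sub, sub_mul]

lemma laplaceTransform_comp_mul_left (f : ℝ → ℝ) (p : ℂ) {c : ℝ} (hc : 0 < c) :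
    laplaceTransform (fun x => f (c * x)) (c * p) = (c⁻¹ : ℝ) * laplaceTransform f p := by
  have hsubst := integral_comp_mul_left_Ioi
    (fun x : ℝ => (f x : ℂ) * Complex.exp (-p * x)) 0 hc
  rw [mul_zero, Complex.real_smul] at hsubst
  rw [laplaceTransform, laplaceTransform, ← hsubst]
  refine setIntegral_congr_fun measurableSet_Ioi fun x _ => ?_
  simp only [Complex.ofReal_mul]
  ring_nf

lemma hasDerivAt_laplaceTransform (hf : LaplaceIntegrable f) (hp : 0 < p.re) :
    HasDerivAt (laplaceTransform f) (-laplaceTransform (fun x => x * f x) p) p := by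
  have hre {q : ℂ} (hq : q ∈ ball p (p.re / 2)) : p.re / 2 < q.re := by
    have := (Complex.abs_re_le_norm (q - p)).trans_lt (mem_ball_iff_norm.1 hq)
    rw [Complex.sub_re, abs_lt] at this
    linarith
  have hhalf : 0 < p.re / 2 := half_pos hp
  have hexp (q : ℂ) : Continuous fun x : ℝ => Complex.exp (-q * x) := by fun_prop
  have hderiv := (hasDerivAt_integral_of_dominated_loc_of_deriv_le (μ := volume.restrict (Ioi 0))
    (F := fun q x => (f x : ℂ) * Complex.exp (-q * x))
    (F' := fun q x => -(((x * f x : ℝ) : ℂ) * Complex.exp (-q * x)))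
    (bound := fun x => ‖x * f x * Real.exp (-(p.re / 2 * x))‖) (ball_mem_nhds p hhalf)
    (.of_forall fun q => hf.aestronglyMeasurable_ofReal.mul (hexp q).aestronglyMeasurable)
    (hf.integrableOn hp) (hf.id_mul.integrableOn hp).aestronglyMeasurable.neg
    ((ae_restrict_mem measurableSet_Ioi).mono fun x hx q hq => ?_)
    (hf.id_mul _ hhalf).norm (.of_forall fun x q _ => ?_)).2
  · rwa [integral_neg] at hderiv
  · have hx : 0 < x := hx
    rw [norm_neg, norm_ofReal_mul_cexp_neg_mul, norm_mul, Real.norm_eq_abs,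
      Real.norm_of_nonneg (Real.exp_nonneg _)]
    gcongr
    exact (hre hq).le
  · have hlin : HasDerivAt (fun q : ℂ => -q * x) (-(x : ℂ)) q := by
      simpa using (hasDerivAt_id q).neg.mul_const (x : ℂ)
    refine (hlin.cexp.const_mul (f x : ℂ)).congr_deriv ?_
    push_cast
    ring

lemma laplaceTransform_deriv (hcont : ContinuousWithinAt f (Ici 0) 0)
    (hderiv : ∀ x > 0, HasDerivAt f (g x) x) (hf : LaplaceIntegrable f) (hg : LaplaceIntegrable g)
    (hp : 0 < p.re) : laplaceTransform g p = p * laplaceTransform f p - f 0 := by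
  have hprod (x : ℝ) (hx : x ∈ Ioi (0 : ℝ)) :
      HasDerivAt (fun x : ℝ => (f x : ℂ) * Complex.exp (-p * x))
        ((g x : ℂ) * Complex.exp (-p * x) - p * ((f x : ℂ) * Complex.exp (-p * x))) x := by
    have hlin : HasDerivAt (fun x : ℝ => -p * (x : ℂ)) (-p) x := by
      simpa using Complex.ofRealCLM.hasDerivAt.const_mul (-p)
    refine ((hderiv x hx).ofReal_comp.mul hlin.cexp).congr_deriv ?_
    ring
  have hexp : Continuous fun x : ℝ => Complex.exp (-p * x) := by fun_prop
  have hint := (hf.integrableOn hp).const_mul p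
  have hint' := (hg.integrableOn hp).sub hint
  have hparts := integral_Ioi_of_hasDerivAt_of_tendsto
    ((Complex.continuous_ofReal.continuousAt.comp_continuousWithinAt hcont).mul
      hexp.continuousWithinAt) hprod hint'
    (tendsto_zero_of_hasDerivAt_of_integrableOn_Ioi hprod hint' (hf.integrableOn hp))
  rw [integral_sub (hg.integrableOn hp) hint, integral_const_mul] at hparts
  rw [laplaceTransform, laplaceTransform]
  simpa [sub_eq_iff_eq_add', ← sub_eq_add_neg] using hparts

lemma integral_mul_sin_mul_exp_neg (hf : LaplaceIntegrable f) (b : ℝ) :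
    ∫ x in Ioi 0, f x * Real.sin (b * x) * Real.exp (-x)
      = (laplaceTransform f (1 - b * Complex.I)).im := by
  rw [laplaceTransform, ← Complex.imCLM_apply,
    ← Complex.imCLM.integral_comp_comm (hf.integrableOn (by simp))]
  refine integral_congr_ae (.of_forall fun x => ?_)
  have hre : (-(1 - b * Complex.I) * x).re = -x := by simp
  have him : (-(1 - b * Complex.I) * x).im = b * x := by simp
  simp only [Complex.imCLM_apply, Complex.im_ofReal_mul, Complex.exp_im, hre, him]
  ring

end laplaceTransform

/-! ### The Laplace transform of `x^{2α} J̃_α(ax)` -/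

/-- The kernel `x^{2α} J̃_α(ax)`, whose Laplace transform is a power of `p² + a²`. -/
noncomputable def besselKernel (α a x : ℝ) : ℝ := x ^ (2 * α) * besselJt α (a * x)

section besselKernel

variable {α : ℝ} (a : ℝ)

lemma abs_besselKernel_le (hα : -1 / 2 ≤ α) {x : ℝ} (hx : 0 ≤ x) :
    |besselKernel α a x| ≤ 1 / Real.Gamma (α + 1) * x ^ (2 * α) := by
  rw [besselKernel, abs_mul, abs_of_nonneg (Real.rpow_nonneg hx _), mul_comm]
  exact mul_le_mul_of_nonneg_right (abs_besselJt_le hα _) (Real.rpow_nonneg hx _)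

lemma hasDerivAt_besselJt_mul (α x : ℝ) :
    HasDerivAt (fun x => besselJt α (a * x)) (-(a ^ 2 * x / 2) * besselJt (α + 1) (a * x)) x := by
  refine ((hasDerivAt_besselJt α (a * x)).comp x ((hasDerivAt_id x).const_mul a)).congr_deriv ?_
  ring

lemma hasDerivAt_besselKernel_add_one {x : ℝ} (hx : 0 < x) :
    HasDerivAt (besselKernel (α + 1) a) (2 * (x * besselKernel α a x)) x := by
  have hrpow := Real.hasDerivAt_rpow_const (x := x) (p := 2 * (α + 1)) (.inl hx.ne')
  refine (hrpow.mul (hasDerivAt_besselJt_mul a (α + 1) x)).congr_deriv ?_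
  rw [besselKernel, besselJt_recurrence α, add_assoc α 1 1, one_add_one_eq_two,
    show 2 * (α + 1) - 1 = 2 * α + 1 by ring, show 2 * (α + 1) = 2 * α + 1 + 1 by ring,
    Real.rpow_add_one hx.ne' (2 * α + 1), Real.rpow_add_one hx.ne' (2 * α)]
  ring

lemma hasDerivAt_id_mul_besselKernel {x : ℝ} (hx : 0 < x) :
    HasDerivAt (fun x => x * besselKernel α a x)
      ((2 * α + 1) * besselKernel α a x - a ^ 2 / 2 * besselKernel (α + 1) a x) x := by
  have hrpow := Real.hasDerivAt_rpow_const (x := x) (p := 2 * α) (.inl hx.ne')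
  refine ((hasDerivAt_id x).mul (hrpow.mul (hasDerivAt_besselJt_mul a α x))).congr_deriv ?_
  have hpred : x * x ^ (2 * α - 1) = x ^ (2 * α) := by
    rw [mul_comm, ← Real.rpow_add_one hx.ne', sub_add_cancel]
  simp only [besselKernel, id, Pi.mul_apply]
  rw [show 2 * (α + 1) = 2 * α + 1 + 1 by ring, Real.rpow_add_one hx.ne',
    Real.rpow_add_one hx.ne']
  linear_combination 2 * α * besselJt α (a * x) * hpred

lemma continuous_besselKernel (hα : 0 ≤ α) : Continuous (besselKernel α a) :=
  (Real.continuous_rpow_const (by positivity)).mul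
    ((continuous_besselJt α).comp (continuous_const_mul a))

lemma continuousWithinAt_id_mul_besselKernel (hα : -1 / 2 < α) :
    ContinuousWithinAt (fun x => x * besselKernel α a x) (Ici 0) 0 := by
  have hrpow : ContinuousWithinAt (fun x : ℝ => x ^ (2 * α + 1)) (Ici 0) 0 :=
    (Real.continuous_rpow_const (by linarith)).continuousWithinAt
  refine (hrpow.mul (((continuous_besselJt α).comp
    (continuous_const_mul a)).continuousWithinAt)).congr (fun x hx => ?_) ?_
  · rcases eq_or_lt_of_le (show 0 ≤ x from hx) with rfl | hx
    · simp [Real.zero_rpow (show 2 * α + 1 ≠ 0 by linarith)]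
    · simp only [besselKernel, Pi.mul_apply, Function.comp_apply, Real.rpow_add_one hx.ne']
      ring
  · simp [Real.zero_rpow (show 2 * α + 1 ≠ 0 by linarith)]

lemma laplaceIntegrable_besselKernel (hα : -1 / 2 < α) : LaplaceIntegrable (besselKernel α a) := by
  refine .of_abs_le_rpow (by linarith) ?_ fun x hx => abs_besselKernel_le a hα.le hx.le
  exact ((measurable_id.pow_const _).mul
    ((continuous_besselJt α).comp (continuous_const_mul a)).measurable).aestronglyMeasurable

lemma laplaceTransform_besselKernel_mul_id (hα : -1 / 2 < α) {p : ℂ} (hp : 0 < p.re) :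
    (p ^ 2 + a ^ 2) * laplaceTransform (fun x => x * besselKernel α a x) p
      = (2 * α + 1) * p * laplaceTransform (besselKernel α a) p := by
  have hk := laplaceIntegrable_besselKernel a hα
  have hk₁ := laplaceIntegrable_besselKernel a (show -1 / 2 < α + 1 by linarith)
  have hraise := laplaceTransform_deriv (continuous_besselKernel a (by linarith)).continuousWithinAt
    (fun x hx => hasDerivAt_besselKernel_add_one (α := α) a hx) hk₁ (hk.id_mul.const_mul 2) hp
  have hlower := laplaceTransform_deriv (continuousWithinAt_id_mul_besselKernel a hα)
    (fun x hx => hasDerivAt_id_mul_besselKernel a hx) hk.id_mul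
    ((hk.const_mul (2 * α + 1)).sub (hk₁.const_mul (a ^ 2 / 2))) hp
  have hzero : besselKernel (α + 1) a 0 = 0 := by
    rw [besselKernel, Real.zero_rpow (by linarith), zero_mul]
  rw [laplaceTransform_const_mul, hzero, Complex.ofReal_zero, sub_zero] at hraise
  rw [laplaceTransform_sub (hk.const_mul _) (hk₁.const_mul _) hp, laplaceTransform_const_mul,
    laplaceTransform_const_mul, zero_mul, Complex.ofReal_zero, sub_zero] at hlower
  push_cast at hraise hlower
  linear_combination -p * hlower + a ^ 2 / 2 * hraise

end besselKernel

lemma sq_add_sq_mem_slitPlane {p : ℂ} (hp : 0 < p.re) (a : ℝ) :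
    p ^ 2 + (a : ℂ) ^ 2 ∈ Complex.slitPlane := by
  rw [Complex.mem_slitPlane_iff]
  have hre : (p ^ 2 + (a : ℂ) ^ 2).re = p.re ^ 2 - p.im ^ 2 + a ^ 2 := by
    simp [sq]
  have him : (p ^ 2 + (a : ℂ) ^ 2).im = 2 * p.re * p.im := by
    simp only [sq, Complex.add_im, Complex.mul_im, Complex.ofReal_im]
    ring
  rw [hre, him]
  rcases eq_or_ne p.im 0 with h | h
  · left
    rw [h, zero_pow two_ne_zero, sub_zero]
    positivity
  · exact .inr (mul_ne_zero (by positivity) h)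

section laplaceTransformBessel

variable {α : ℝ} (a : ℝ)

lemma laplaceTransform_besselKernel_mul_cpow_eq (hα : -1 / 2 < α) {p q : ℂ} (hp : 0 < p.re)
    (hq : 0 < q.re) :
    laplaceTransform (besselKernel α a) p * (p ^ 2 + a ^ 2) ^ (α + 1 / 2 : ℂ)
      = laplaceTransform (besselKernel α a) q * (q ^ 2 + a ^ 2) ^ (α + 1 / 2 : ℂ) := by
  have hderiv (z : ℂ) (hz : 0 < z.re) : HasDerivAt (fun z =>
      laplaceTransform (besselKernel α a) z * (z ^ 2 + (a : ℂ) ^ 2) ^ (α + 1 / 2 : ℂ)) 0 z := by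
    have hbase := sq_add_sq_mem_slitPlane hz a
    have hpow := ((hasDerivAt_pow 2 z).add_const ((a : ℂ) ^ 2)).cpow_const (c := α + 1 / 2) hbase
    refine ((hasDerivAt_laplaceTransform (laplaceIntegrable_besselKernel a hα) hz).mul
      hpow).congr_deriv ?_
    have hode := laplaceTransform_besselKernel_mul_id a hα hz
    have hsplit : (z ^ 2 + (a : ℂ) ^ 2) ^ (α + 1 / 2 : ℂ)
        = (z ^ 2 + (a : ℂ) ^ 2) ^ (α + 1 / 2 - 1 : ℂ) * (z ^ 2 + (a : ℂ) ^ 2) := by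
      conv_rhs => enter [2]; rw [← Complex.cpow_one (z ^ 2 + (a : ℂ) ^ 2)]
      rw [← Complex.cpow_add _ _ (Complex.slitPlane_ne_zero hbase), sub_add_cancel]
    rw [hsplit]
    push_cast
    linear_combination -(z ^ 2 + (a : ℂ) ^ 2) ^ (α + 1 / 2 - 1 : ℂ) * hode
  exact (isOpen_lt continuous_const Complex.continuous_re).is_const_of_deriv_eq_zero
    (convex_halfSpace_re_gt 0).isPreconnected
    (fun z hz => (hderiv z hz).differentiableAt.differentiableWithinAt)
    (fun z hz => (hderiv z hz).deriv) hp hq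

lemma besselKernel_eq_rpow_mul_dilation (α : ℝ) {s x : ℝ} (hs : 0 < s) (hx : 0 < x) :
    besselKernel α a x = s ^ (-(2 * α)) * besselKernel α (a / s) (s * x) := by
  rw [besselKernel, besselKernel, Real.mul_rpow hs.le hx.le, Real.rpow_neg hs.le,
    ← mul_assoc, ← mul_assoc, inv_mul_cancel₀ (Real.rpow_pos_of_pos hs _).ne', one_mul,
    ← mul_assoc, div_mul_cancel₀ a hs.ne']

lemma laplaceTransform_besselKernel_ofReal (α : ℝ) {s : ℝ} (hs : 0 < s) :
    laplaceTransform (besselKernel α a) s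
      = (s ^ (-(2 * α)) * s⁻¹ : ℝ) * laplaceTransform (besselKernel α (a / s)) 1 := by
  have hdilate := laplaceTransform_comp_mul_left (besselKernel α (a / s)) 1 hs
  rw [mul_one] at hdilate
  rw [laplaceTransform_congr fun x hx => besselKernel_eq_rpow_mul_dilation a α hs hx,
    laplaceTransform_const_mul, hdilate, Complex.ofReal_mul, mul_assoc]

lemma ofReal_sq_add_sq_cpow (α : ℝ) {s : ℝ} (hs : 0 < s) :
    ((s : ℂ) ^ 2 + a ^ 2) ^ (α + 1 / 2 : ℂ)
      = (s ^ (2 * α) * s : ℝ) * ((1 : ℂ) ^ 2 + (a / s : ℝ) ^ 2) ^ (α + 1 / 2 : ℂ) := by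
  have hbase : (s : ℂ) ^ 2 + a ^ 2 = (s ^ 2 : ℝ) * (((1 + (a / s) ^ 2 : ℝ)) : ℂ) := by
    rw [← Complex.ofReal_mul, mul_add, mul_one, ← mul_pow, mul_div_cancel₀ a hs.ne']
    push_cast
    ring
  have hsq : (s ^ 2) ^ (α + 1 / 2) = s ^ (2 * α) * s := by
    rw [← Real.rpow_natCast_mul hs.le, ← Real.rpow_add_one hs.ne']
    congr 1
    push_cast
    ring
  have hexponent : (α + 1 / 2 : ℂ) = (α + 1 / 2 : ℝ) := by push_cast; rfl
  rw [hbase, Complex.mul_cpow_ofReal_nonneg (by positivity) (by positivity), hexponent,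
    ← Complex.ofReal_cpow (sq_nonneg s), hsq]
  push_cast
  rw [one_pow]

lemma laplaceTransform_besselKernel_mul_cpow_ofReal (α : ℝ) {s : ℝ} (hs : 0 < s) :
    laplaceTransform (besselKernel α a) s * ((s : ℂ) ^ 2 + a ^ 2) ^ (α + 1 / 2 : ℂ)
      = laplaceTransform (besselKernel α (a / s)) 1 *
        ((1 : ℂ) ^ 2 + (a / s : ℝ) ^ 2) ^ (α + 1 / 2 : ℂ) := by
  have hcancel : s ^ (-(2 * α)) * s⁻¹ * (s ^ (2 * α) * s) = 1 := by
    have := (Real.rpow_pos_of_pos hs (2 * α)).ne'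
    rw [Real.rpow_neg hs.le]
    field_simp
  rw [laplaceTransform_besselKernel_ofReal a α hs, ofReal_sq_add_sq_cpow a α hs, mul_mul_mul_comm,
    ← Complex.ofReal_mul, hcancel, Complex.ofReal_one, one_mul]

lemma continuous_laplaceTransform_besselKernel (hα : -1 / 2 < α) {p : ℂ} (hp : 0 < p.re) :
    Continuous fun a => laplaceTransform (besselKernel α a) p := by
  have hpow : LaplaceIntegrable fun x => 1 / Real.Gamma (α + 1) * x ^ (2 * α) :=
    .of_abs_le_rpow (r := 2 * α) (C := 1 / Real.Gamma (α + 1)) (by linarith)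
      (measurable_id.pow_const _ |>.const_mul _).aestronglyMeasurable fun x hx =>
      (abs_of_nonneg (mul_nonneg (one_div_nonneg.2 (Real.Gamma_nonneg_of_nonneg (by linarith)))
        (Real.rpow_nonneg hx.le _))).le
  refine continuous_of_dominated
    (fun a => ((laplaceIntegrable_besselKernel a hα).integrableOn hp).aestronglyMeasurable)
    (fun a => (ae_restrict_mem measurableSet_Ioi).mono fun x hx => ?_) (hpow p.re hp)
    (.of_forall fun x => ?_)
  · rw [norm_ofReal_mul_cexp_neg_mul]
    exact mul_le_mul_of_nonneg_right (abs_besselKernel_le a hα.le (le_of_lt hx))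
      (Real.exp_nonneg _)
  · have := (continuous_besselJt α).comp (continuous_mul_const x)
    exact (Complex.continuous_ofReal.comp (continuous_const.mul this)).mul continuous_const

lemma laplaceTransform_besselKernel_zero (hα : -1 / 2 < α) :
    laplaceTransform (besselKernel α 0) 1
      = (Real.Gamma (2 * α + 1) / Real.Gamma (α + 1) : ℝ) := by
  have hintegrand (x : ℝ) : (besselKernel α 0 x : ℂ) * Complex.exp (-1 * x)
      = (1 / Real.Gamma (α + 1) * (Real.exp (-x) * x ^ (2 * α + 1 - 1)) : ℝ) := by
    rw [besselKernel, zero_mul, besselJt_zero_right, add_sub_cancel_right]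
    push_cast
    ring_nf
  rw [laplaceTransform]
  simp only [hintegrand]
  rw [integral_complex_ofReal, integral_const_mul, ← Real.Gamma_eq_integral (by linarith),
    one_div_mul_eq_div]

lemma laplaceTransform_besselKernel_one (hα : -1 / 2 < α) :
    laplaceTransform (besselKernel α a) 1 * ((1 : ℂ) ^ 2 + a ^ 2) ^ (α + 1 / 2 : ℂ)
      = (Real.Gamma (2 * α + 1) / Real.Gamma (α + 1) : ℝ) := by
  -- The expression is constant along `a / s`, so it can be evaluated in the limit `a / s → 0`.
  set Φ : ℝ → ℂ := fun a =>
    laplaceTransform (besselKernel α a) 1 * ((1 : ℂ) ^ 2 + a ^ 2) ^ (α + 1 / 2 : ℂ) with hΦ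
  have hscale (s : ℝ) (hs : 0 < s) : Φ (a / s) = Φ a := by
    have hs' : 0 < (s : ℂ).re := hs
    exact (laplaceTransform_besselKernel_mul_cpow_ofReal a α hs).symm.trans
      (laplaceTransform_besselKernel_mul_cpow_eq a hα hs' (by simp))
  have hcont : Continuous Φ := by
    refine (continuous_laplaceTransform_besselKernel hα (by simp)).mul
      (Continuous.cpow (by fun_prop) continuous_const fun a => sq_add_sq_mem_slitPlane (by simp) a)
  have hlim : Tendsto (fun s => Φ (a / s)) atTop (nhds (Φ 0)) :=
    (hcont.tendsto 0).comp (tendsto_const_nhds.div_atTop tendsto_id)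
  have hconst : Tendsto (fun s => Φ (a / s)) atTop (nhds (Φ a)) :=
    tendsto_const_nhds.congr' ((eventually_gt_atTop 0).mono fun s hs => (hscale s hs).symm)
  have hzero : Φ 0 = (Real.Gamma (2 * α + 1) / Real.Gamma (α + 1) : ℝ) := by
    simp [hΦ, laplaceTransform_besselKernel_zero hα]
  rw [← hzero]
  exact tendsto_nhds_unique hconst hlim

theorem laplaceTransform_besselKernel (hα : -1 / 2 < α) {p : ℂ} (hp : 0 < p.re) :
    laplaceTransform (besselKernel α a) p
      = (Real.Gamma (2 * α + 1) / Real.Gamma (α + 1) : ℝ)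
        * (p ^ 2 + a ^ 2) ^ (-(α + 1 / 2) : ℂ) := by
  have hne := Complex.slitPlane_ne_zero (sq_add_sq_mem_slitPlane hp a)
  rw [← laplaceTransform_besselKernel_one a hα,
    ← laplaceTransform_besselKernel_mul_cpow_eq a hα hp (by simp), Complex.cpow_neg,
    mul_assoc, mul_inv_cancel₀ (Complex.cpow_ne_zero_iff.2 (.inl hne)), mul_one]

end laplaceTransformBessel

/-! ### Generating functions of Laguerre and Gegenbauer polynomials -/

section Series

variable {E : Type*} [NormedAddCommGroup E]

lemma hasSum_of_eq_sum_fiber [CompleteSpace E] {ι : Type*} {T : ι → E} {g : ℕ → E} {s : E}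
    (hT : HasSum T s) (w : ι → ℕ) (S : ℕ → Finset ι) (hS : ∀ n q, q ∈ S n ↔ w q = n)
    (hg : ∀ n, g n = ∑ q ∈ S n, T q) : HasSum g s := by
  have hfiber (n : ℕ) : ∑' q : w ⁻¹' {n}, T q = g n := by
    rw [hg, ← (S n).tsum_subtype', show w ⁻¹' {n} = ↑(S n) from Set.ext fun q => (hS n q).symm]
  simpa only [hfiber] using hT.tsum_fiberwise w

lemma summable_of_summable_sum_antidiagonal {T : ℕ × ℕ → E}
    (hT : Summable fun n => ∑ q ∈ Finset.HasAntidiagonal.antidiagonal n, ‖T q‖) :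
    Summable fun q => ‖T q‖ := by
  rw [← Finset.HasAntidiagonal.sigmaAntidiagonalEquivProd.summable_iff]
  refine (summable_sigma_of_nonneg fun q => norm_nonneg _).2
    ⟨fun n => .of_finite, hT.congr fun n => ?_⟩
  exact ((Finset.HasAntidiagonal.antidiagonal n).tsum_subtype _).symm

lemma hasSum_prod_of_rows {T : ℕ × ℕ → E} {g : ℕ → E} {s : E} (hT : Summable T)
    (hrow : ∀ k, HasSum (fun n => T (k, n)) (g k)) (hg : HasSum g s) : HasSum T s := by
  rw [← (hT.hasSum.prod_fiberwise hrow).unique hg]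
  exact hT.hasSum

end Series

lemma hasSum_div_factorial_mul_choose_mul_pow (μ k : ℕ) (c : ℝ) {t : ℝ} (ht : |t| < 1) :
    HasSum (fun n => c ^ k / k.factorial * (((n + (k + μ)).choose (k + μ) : ℝ) * t ^ n))
      (1 / (1 - t) ^ (μ + 1) * ((c / (1 - t)) ^ k / k.factorial)) := by
  have hne : 1 - t ≠ 0 := by linarith [(abs_lt.1 ht).2]
  have hval : c ^ k / k.factorial * (1 / (1 - t) ^ (k + μ + 1))
      = 1 / (1 - t) ^ (μ + 1) * ((c / (1 - t)) ^ k / k.factorial) := by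
    rw [div_pow, show k + μ + 1 = μ + 1 + k by ring, pow_add (1 - t)]
    field_simp
  rw [← hval]
  exact (hasSum_choose_mul_geometric_of_norm_lt_one (𝕜 := ℝ) (k + μ) ht).mul_left _

lemma hasSum_prod_div_factorial_mul_choose_mul_pow (μ : ℕ) (c : ℝ) {t : ℝ} (ht : |t| < 1) :
    HasSum (fun q : ℕ × ℕ => c ^ q.1 / q.1.factorial
        * (((q.2 + (q.1 + μ)).choose (q.1 + μ) : ℝ) * t ^ q.2))
      (1 / (1 - t) ^ (μ + 1) * Real.exp (c / (1 - t))) := by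
  have hrow (c : ℝ) {t : ℝ} (ht : |t| < 1) (k : ℕ) :=
    hasSum_div_factorial_mul_choose_mul_pow μ k c ht
  have hcol (c t : ℝ) : HasSum (fun k : ℕ => 1 / (1 - t) ^ (μ + 1)
      * ((c / (1 - t)) ^ k / k.factorial)) (1 / (1 - t) ^ (μ + 1) * Real.exp (c / (1 - t))) := by
    rw [Real.exp_eq_exp_ℝ]
    exact (NormedSpace.expSeries_div_hasSum_exp (c / (1 - t))).mul_left _
  have ht' : |(|t|)| < 1 := by rwa [abs_abs]
  have hsummable : Summable fun q : ℕ × ℕ => |c| ^ q.1 / q.1.factorial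
      * (((q.2 + (q.1 + μ)).choose (q.1 + μ) : ℝ) * |t| ^ q.2) :=
    (summable_prod_of_nonneg fun q => by positivity).2 ⟨fun k => (hrow |c| ht' k).summable,
      (hcol |c| |t|).summable.congr fun k => (hrow |c| ht' k).tsum_eq.symm⟩
  refine hasSum_prod_of_rows (.of_abs (hsummable.congr fun q => ?_)) (hrow c ht) (hcol c t)
  simp only [abs_mul, abs_div, abs_pow, Nat.abs_cast]

lemma hasSum_laguerreL_mul_pow (μ : ℕ) (y : ℝ) {t : ℝ} (ht : |t| < 1) :
    HasSum (fun j => laguerreL j μ y * t ^ j)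
      (1 / (1 - t) ^ (μ + 1) * Real.exp (-(y * t / (1 - t)))) := by
  rw [← neg_div]
  refine hasSum_of_eq_sum_fiber (hasSum_prod_div_factorial_mul_choose_mul_pow μ _ ht)
    (fun q => q.1 + q.2) Finset.HasAntidiagonal.antidiagonal
    (fun n q => Finset.HasAntidiagonal.mem_antidiagonal) fun j => ?_
  rw [Finset.Nat.sum_antidiagonal_eq_sum_range_succ_mk, laguerreL, Finset.sum_mul]
  refine Finset.sum_congr rfl fun k hk => ?_
  obtain ⟨n, rfl⟩ := Nat.exists_eq_add_of_le (Nat.lt_succ_iff.1 (Finset.mem_range.1 hk))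
  rw [Nat.add_sub_cancel_left, show n + (k + μ) = k + n + μ by ring,
    ← Nat.choose_symm_of_eq_add (show k + n + μ = n + (k + μ) by ring), neg_pow (y * t), mul_pow,
    pow_add]
  ring

lemma abs_laguerreL_le (j μ : ℕ) {y : ℝ} (hy : 0 ≤ y) : |laguerreL j μ y| ≤ laguerreL j μ (-y) := by
  refine (Finset.abs_sum_le_sum_abs _ _).trans (Finset.sum_le_sum fun k _ => le_of_eq ?_)
  have hsign : (-1 : ℝ) ^ k * (-1) ^ k = 1 := by rw [← mul_pow]; norm_num
  rw [abs_div, abs_mul, abs_mul, abs_pow, abs_neg, abs_one, one_pow, one_mul, Nat.abs_cast,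
    Nat.abs_cast, abs_of_nonneg (pow_nonneg hy k), neg_pow y]
  linear_combination (-((j + μ).choose (j - k) : ℝ) * y ^ k / k.factorial) * hsign

lemma continuous_laguerreL (j μ : ℕ) : Continuous (laguerreL j μ) :=
  continuous_finsetSum _ fun k _ => by fun_prop

lemma LaplaceIntegrable.laguerreL_mul {f : ℝ → ℝ} (hf : LaplaceIntegrable f) (j μ : ℕ) (c : ℝ) :
    LaplaceIntegrable fun x => laguerreL j μ (c * x) * f x := by
  intro s hs
  simp only [laguerreL, Finset.sum_mul]
  refine integrable_finsetSum _ fun k _ => (((hf.pow_mul k).const_mul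
    ((-1) ^ k * (j + μ).choose (j - k) * c ^ k / k.factorial)) s hs).congr (.of_forall fun x => ?_)
  simp only [mul_pow]
  ring

lemma Gamma_add_natCast_div_factorial {l : ℝ} (hl : 0 < l) (m : ℕ) :
    ((Real.Gamma (l + m) / m.factorial : ℝ) : ℂ)
      = Real.Gamma l * Ring.choose ((l : ℂ) + m - 1) m := by
  have hΓ : Complex.Gamma l ≠ 0 := Complex.Gamma_ne_zero_of_re_pos (by simpa using hl)
  have hchoose : (m.factorial : ℂ) * Ring.choose ((l : ℂ) + m - 1) m
      = Complex.Gamma (l + m) / Complex.Gamma l := by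
    have hpole (k : ℕ) : (l : ℂ) ≠ -k := by
      norm_cast
      exact ne_of_gt (lt_of_le_of_lt (by simp) hl)
    rw [Complex.Gamma_add_nat_div_Gamma_eq _ hpole, ← nsmul_eq_mul, Ring.choose,
      Ring.factorial_nsmul_multichoose_eq_ascPochhammer, Polynomial.ascPochhammer_smeval_eq_eval]
    congr 1
    ring
  have hfact : (m.factorial : ℂ) ≠ 0 := by exact_mod_cast m.factorial_ne_zero
  push_cast
  rw [← Complex.Gamma_ofReal, ← Complex.Gamma_ofReal, div_eq_iff hfact, mul_assoc,
    mul_comm (Ring.choose _ _), hchoose]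
  push_cast
  field_simp

lemma hasSum_Gamma_add_natCast_div_factorial_mul_pow {l : ℝ} (hl : 0 < l) {z : ℂ} (hz : ‖z‖ < 1) :
    HasSum (fun m : ℕ => ((Real.Gamma (l + m) / m.factorial : ℝ) : ℂ) * z ^ m)
      (Real.Gamma l * (1 - z) ^ (-l : ℂ)) := by
  have hbinom := (Complex.one_div_one_sub_cpow_hasFPowerSeriesOnBall_zero l).hasSum
    (y := z) (by simpa [enorm, ← NNReal.coe_lt_one] using hz)
  simp only [FormalMultilinearSeries.ofScalars_apply_eq, smul_eq_mul, zero_add] at hbinom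
  simp only [Gamma_add_natCast_div_factorial hl, mul_assoc]
  rw [Complex.cpow_neg, ← one_div]
  exact hbinom.mul_left _

lemma sum_antidiagonal_div_factorial_mul_pow {K : Type*} [Field K] [CharZero K] (c : ℕ → K)
    (u v : K) (m : ℕ) :
    ∑ q ∈ Finset.HasAntidiagonal.antidiagonal m,
        c (q.1 + q.2) / (q.1.factorial * q.2.factorial) * (u ^ q.1 * v ^ q.2)
      = c m / m.factorial * (u + v) ^ m := by
  rw [(Commute.all u v).add_pow', Finset.mul_sum]
  refine Finset.sum_congr rfl fun q hq => ?_
  obtain rfl := Finset.HasAntidiagonal.mem_antidiagonal.1 hq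
  have hfact (n : ℕ) : (n.factorial : K) ≠ 0 := by exact_mod_cast n.factorial_ne_zero
  rw [nsmul_eq_mul, Nat.cast_add_choose]
  have h₁ := hfact q.1
  have h₂ := hfact q.2
  have h₃ := hfact (q.1 + q.2)
  field_simp

lemma hasSum_div_factorial_mul_pow_mul_pow {c : ℕ → ℂ} {u v s : ℂ}
    (hc : Summable fun m => ‖c m‖ / m.factorial * (‖u‖ + ‖v‖) ^ m)
    (hs : HasSum (fun m => c m / m.factorial * (u + v) ^ m) s) :
    HasSum (fun q : ℕ × ℕ =>
      c (q.1 + q.2) / (q.1.factorial * q.2.factorial) * (u ^ q.1 * v ^ q.2)) s := by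
  have hsummable : Summable fun q : ℕ × ℕ =>
      c (q.1 + q.2) / (q.1.factorial * q.2.factorial) * (u ^ q.1 * v ^ q.2) := by
    refine .of_norm (summable_of_summable_sum_antidiagonal (hc.congr fun m => ?_))
    rw [← sum_antidiagonal_div_factorial_mul_pow (fun m => ‖c m‖)]
    simp only [norm_mul, norm_div, norm_pow, Complex.norm_natCast]
  have hdiag := hasSum_of_eq_sum_fiber hsummable.hasSum (fun q => q.1 + q.2)
    Finset.HasAntidiagonal.antidiagonal (fun n q => Finset.HasAntidiagonal.mem_antidiagonal)
    fun m => (sum_antidiagonal_div_factorial_mul_pow c u v m).symm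
  exact hdiag.unique hs ▸ hsummable.hasSum

lemma gegenbauerCt_mul_pow_eq_sum (n : ℕ) (l x : ℝ) (w : ℂ) :
    (gegenbauerCt n l x : ℂ) * w ^ n
      = ∑ q ∈ (Finset.range (n / 2 + 1)).image fun k => (k, n - 2 * k),
          ((Real.Gamma (l + (q.1 + q.2 : ℕ)) : ℝ) : ℂ) / (q.1.factorial * q.2.factorial)
            * ((-w ^ 2) ^ q.1 * (2 * x * w) ^ q.2) := by
  rw [Finset.sum_image fun k _ k' _ h => (Prod.mk.inj h).1, gegenbauerCt, Complex.ofReal_sum,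
    Finset.sum_mul]
  refine Finset.sum_congr rfl fun k hk => ?_
  obtain ⟨i, rfl⟩ : ∃ i, n = 2 * k + i :=
    Nat.exists_eq_add_of_le (by have := Finset.mem_range.1 hk; lia)
  rw [Nat.add_sub_cancel_left, show l + (2 * k + i : ℕ) - k = l + (k + i : ℕ) by push_cast; ring,
    neg_pow (w ^ 2), mul_pow (2 * (x : ℂ)), ← pow_mul, pow_add]
  push_cast
  ring

lemma hasSum_gegenbauerCt_mul_pow {l : ℝ} (hl : 0 < l) {x : ℝ} {w : ℂ}
    (hw : ‖-w ^ 2‖ + ‖2 * x * w‖ < 1) :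
    HasSum (fun n => (gegenbauerCt n l x : ℂ) * w ^ n)
      (Real.Gamma l * (1 - 2 * x * w + w ^ 2) ^ (-l : ℂ)) := by
  have hΓ (m : ℕ) : 0 < Real.Gamma (l + m) := Real.Gamma_pos_of_pos (by positivity)
  have hnorm := hasSum_Gamma_add_natCast_div_factorial_mul_pow hl
    (z := (‖-w ^ 2‖ + ‖2 * x * w‖ : ℝ)) (by rwa [Complex.norm_of_nonneg (by positivity)])
  have hbinom := hasSum_Gamma_add_natCast_div_factorial_mul_pow hl
    ((norm_add_le (-w ^ 2) (2 * x * w)).trans_lt hw)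
  rw [show 1 - (-w ^ 2 + 2 * x * w) = 1 - 2 * x * w + w ^ 2 by ring] at hbinom
  have hdouble := hasSum_div_factorial_mul_pow_mul_pow
    (c := fun m => (Real.Gamma (l + m) : ℂ)) (u := -w ^ 2) (v := 2 * x * w)
    (hnorm.summable.norm.congr fun m => ?_) (by simpa only [Complex.ofReal_div,
      Complex.ofReal_natCast] using hbinom)
  · refine hasSum_of_eq_sum_fiber hdouble (fun q => 2 * q.1 + q.2) _ (fun n q => ?_) fun n =>
      gegenbauerCt_mul_pow_eq_sum n l x w
    simp only [Finset.mem_image, Finset.mem_range, Prod.ext_iff]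
    exact ⟨by rintro ⟨k, hk, h₁, h₂⟩; lia, fun h => ⟨q.1, by lia, rfl, by lia⟩⟩
  · rw [norm_mul, norm_pow, Complex.norm_of_nonneg (by have := hΓ m; positivity),
      Complex.norm_of_nonneg (by positivity), Complex.norm_of_nonneg (hΓ m).le]

lemma hasSum_laguerreL_mul_pow_mul_exp_neg (μ : ℕ) (c s x : ℝ) {t : ℝ} (ht : |t| < 1) :
    HasSum (fun j => laguerreL j μ (c * x) * t ^ j * Real.exp (-(s * x)))
      (1 / (1 - t) ^ (μ + 1) * Real.exp (-((s + c * t / (1 - t)) * x))) := by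
  rw [show -((s + c * t / (1 - t)) * x) = -(c * x * t / (1 - t)) + -(s * x) by ring, Real.exp_add,
    ← mul_assoc]
  exact (hasSum_laguerreL_mul_pow μ (c * x) ht).mul_right _

lemma hasSum_laguerreL_mul_pow_mul_cexp_neg (μ : ℕ) (c : ℝ) (p : ℂ) (x : ℝ) {t : ℝ}
    (ht : |t| < 1) :
    HasSum (fun j => ((laguerreL j μ (c * x) * t ^ j : ℝ) : ℂ) * Complex.exp (-p * x))
      ((1 / (1 - t) ^ (μ + 1) : ℝ) * Complex.exp (-(p + (c * t / (1 - t) : ℝ)) * x)) := by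
  have hexp_add : Complex.exp (-(p + (c * t / (1 - t) : ℝ)) * x)
      = (Real.exp (-(c * x * t / (1 - t))) : ℂ) * Complex.exp (-p * x) := by
    rw [Complex.ofReal_exp, ← Complex.exp_add]
    push_cast
    ring_nf
  rw [hexp_add, ← mul_assoc, ← Complex.ofReal_mul]
  exact (Complex.hasSum_ofReal.2 (hasSum_laguerreL_mul_pow μ (c * x) ht)).mul_right _

lemma hasSum_laplaceTransform_laguerreL_mul (μ : ℕ) {f : ℝ → ℝ} (hf : LaplaceIntegrable f)
    {c t : ℝ} (hc : 0 ≤ c) (ht : |t| < 1) {p : ℂ} (hp : c * |t| / (1 - |t|) < p.re) :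
    HasSum (fun j => laplaceTransform (fun x => laguerreL j μ (c * x) * f x) p * (t : ℂ) ^ j)
      ((1 / (1 - t) ^ (μ + 1) : ℝ) * laplaceTransform f (p + (c * t / (1 - t) : ℝ))) := by
  have hexp : Continuous fun x : ℝ => Complex.exp (-p * x) := by fun_prop
  have hbound (x : ℝ) := (hasSum_laguerreL_mul_pow_mul_exp_neg μ (-c) p.re x
    (show |(|t|)| < 1 by rwa [abs_abs])).mul_left ‖f x‖
  simp only [laplaceTransform, ← integral_const_mul, ← integral_mul_const]
  refine hasSum_integral_of_dominated_convergence
    (fun j x => ‖f x‖ * (laguerreL j μ (-c * x) * |t| ^ j * Real.exp (-(p.re * x))))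
    (fun j => ?_) (fun j => (ae_restrict_mem measurableSet_Ioi).mono fun x hx => ?_)
    (.of_forall fun x => (hbound x).summable) ?_ (.of_forall fun x => ?_)
  · have hL := (continuous_laguerreL j μ).comp (continuous_const_mul c)
    exact ((Complex.continuous_ofReal.comp_aestronglyMeasurable
      (hL.aestronglyMeasurable.mul hf.aestronglyMeasurable)).mul
        hexp.aestronglyMeasurable).mul_const _
  · have hle : |laguerreL j μ (c * x)| ≤ laguerreL j μ (-c * x) := by
      rw [neg_mul]
      exact abs_laguerreL_le j μ (mul_nonneg hc (le_of_lt hx))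
    calc ‖((laguerreL j μ (c * x) * f x : ℝ) : ℂ) * Complex.exp (-p * x) * (t : ℂ) ^ j‖
        = ‖f x‖ * (|laguerreL j μ (c * x)| * |t| ^ j * Real.exp (-(p.re * x))) := by
          rw [norm_mul, norm_ofReal_mul_cexp_neg_mul, norm_pow, Complex.norm_real,
            Real.norm_eq_abs, abs_mul, Real.norm_eq_abs]
          ring
      _ ≤ ‖f x‖ * (laguerreL j μ (-c * x) * |t| ^ j * Real.exp (-(p.re * x))) := by gcongr
  · have hpos : 0 < p.re + -c * |t| / (1 - |t|) := by
      rw [neg_mul, neg_div]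
      exact sub_pos.2 hp
    refine ((hf _ hpos).norm.const_mul (1 / (1 - |t|) ^ (μ + 1))).congr (.of_forall fun x => ?_)
    simp only [(hbound x).tsum_eq]
    rw [norm_mul, Real.norm_of_nonneg (Real.exp_nonneg _), mul_left_comm]
  · have hsum := (hasSum_laguerreL_mul_pow_mul_cexp_neg μ c p x ht).mul_left (f x : ℂ)
    rw [mul_left_comm] at hsum
    refine hsum.congr_fun fun j => ?_
    push_cast
    ring

lemma eq_of_eventually_hasSum_pow_smul {𝕜 E : Type*} [NontriviallyNormedField 𝕜]
    [NormedAddCommGroup E] [NormedSpace 𝕜 E] {c d : ℕ → E} {f : 𝕜 → E}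
    (hc : ∀ᶠ z in nhds 0, HasSum (fun n => z ^ n • c n) (f z))
    (hd : ∀ᶠ z in nhds 0, HasSum (fun n => z ^ n • d n) (f z)) : c = d := by
  have hseries {c : ℕ → E} (hc : ∀ᶠ z in nhds 0, HasSum (fun n => z ^ n • c n) (f z)) :
      HasFPowerSeriesAt f
        (fun n => ContinuousMultilinearMap.mkPiRing 𝕜 (Fin n) (c n) : FormalMultilinearSeries 𝕜 𝕜 E)
        0 := by
    refine hasFPowerSeriesAt_iff.2 ?_
    simpa [FormalMultilinearSeries.coeff] using hc
  funext n
  have := congrFun ((hseries hc).eq_formalMultilinearSeries (hseries hd)) n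
  simpa using congrArg (fun m => m fun _ => (1 : 𝕜)) this

/-! ### Complex powers and the change of variables -/

lemma Gamma_two_mul_add_one_div_Gamma {α : ℝ} (hα : -1 / 2 < α) :
    Real.Gamma (2 * α + 1) / Real.Gamma (α + 1)
      = 2 ^ (2 * α) / √π * Real.Gamma (α + 1 / 2) := by
  have hΓ : Real.Gamma (α + 1) ≠ 0 := (Real.Gamma_pos_of_pos (by linarith)).ne'
  have hdup := Real.Gamma_mul_Gamma_add_half (α + 1 / 2)
  rw [show α + 1 / 2 + 1 / 2 = α + 1 by ring, show 2 * (α + 1 / 2) = 2 * α + 1 by ring,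
    show 1 - (2 * α + 1) = -(2 * α) by ring, Real.rpow_neg zero_le_two] at hdup
  have : (2 : ℝ) ^ (2 * α) ≠ 0 := by positivity
  field_simp at hdup ⊢
  linear_combination -hdup

lemma mul_cpow_of_im_nonpos_of_im_nonneg {z w : ℂ} (hz : z ∈ Complex.slitPlane) (hzi : z.im ≤ 0)
    (hw : w ≠ 0) (hwi : 0 ≤ w.im) (s : ℂ) : (z * w) ^ s = z ^ s * w ^ s := by
  have hz₀ := Complex.slitPlane_ne_zero hz
  have hz_le : z.arg ≤ 0 := by
    rcases hzi.lt_or_eq with h | h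
    · exact (Complex.arg_neg_iff.2 h).le
    · exact (Complex.arg_eq_zero_iff.2 ⟨(hz.resolve_right (not_not.2 h)).le, h⟩).le
  -- The arguments have opposite signs, so their sum stays in the principal range.
  have harg : z.arg + w.arg ∈ Ioc (-π) π :=
    ⟨by linarith [Complex.neg_pi_lt_arg z, Complex.arg_nonneg_iff.2 hwi],
      by linarith [Complex.arg_le_pi w]⟩
  rw [Complex.cpow_def_of_ne_zero (mul_ne_zero hz₀ hw), Complex.cpow_def_of_ne_zero hz₀,
    Complex.cpow_def_of_ne_zero hw, Complex.log_mul hz₀ hw harg, add_mul, Complex.exp_add]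

lemma ofReal_mul_cexp_mul_I_cpow {r φ : ℝ} (hr : 0 < r) (hφ : φ ∈ Ioc (-π) π) (s : ℝ) :
    ((r : ℂ) * Complex.exp (φ * Complex.I)) ^ (s : ℂ)
      = (r ^ s : ℝ) * Complex.exp ((s * φ : ℝ) * Complex.I) := by
  have hr' : (r : ℂ) ≠ 0 := by exact_mod_cast hr.ne'
  have hexp := Complex.exp_ne_zero (φ * Complex.I)
  rw [Complex.cpow_def_of_ne_zero (mul_ne_zero hr' hexp), Complex.log_ofReal_mul hr hexp,
    Complex.log_exp (by simpa using hφ.1) (by simpa using hφ.2), add_mul, Complex.exp_add,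
    Real.rpow_def_of_pos hr, Complex.ofReal_exp]
  push_cast
  ring_nf

lemma ofReal_mul_cexp_mul_ofReal_mul_cexp (r s x y : ℝ) :
    (r * Complex.exp (x * Complex.I)) * (s * Complex.exp (y * Complex.I))
      = (r * s : ℝ) * Complex.exp ((x + y : ℝ) * Complex.I) := by
  rw [mul_mul_mul_comm, ← Complex.exp_add, ← add_mul, Complex.ofReal_mul, Complex.ofReal_add]

lemma ofReal_rpow_mul_cexp_mul_neg {r : ℝ} (hr : 0 < r) (φ s : ℝ) :
    ((r ^ s : ℝ) * Complex.exp ((s * φ : ℝ) * Complex.I))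
        * ((r ^ (-s) : ℝ) * Complex.exp ((-s * φ : ℝ) * Complex.I)) = 1 := by
  rw [ofReal_mul_cexp_mul_ofReal_mul_cexp, ← Real.rpow_add hr, ← add_mul, add_neg_cancel]
  simp

lemma sq_add_sq_mul_cpow {p : ℂ} (hp : 0 < p.re) (hpi : p.im ≤ 0) (a : ℝ) {r φ : ℝ} (hr : 0 < r)
    (hφ : φ ∈ Icc 0 π) (s : ℝ) :
    ((p ^ 2 + a ^ 2) * (r * Complex.exp (φ * Complex.I))) ^ (s : ℂ)
      = (p ^ 2 + a ^ 2) ^ (s : ℂ) * ((r ^ s : ℝ) * Complex.exp ((s * φ : ℝ) * Complex.I)) := by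
  have him : ((p ^ 2 + a ^ 2 : ℂ)).im ≤ 0 := by
    rw [Complex.add_im, ← Complex.ofReal_pow, Complex.ofReal_im, sq, Complex.mul_im]
    linarith [mul_nonpos_of_nonneg_of_nonpos hp.le hpi]
  have him' : 0 ≤ (r * Complex.exp (φ * Complex.I)).im := by
    rw [Complex.im_ofReal_mul, Complex.exp_ofReal_mul_I_im]
    exact mul_nonneg hr.le (Real.sin_nonneg_of_mem_Icc hφ)
  rw [← ofReal_mul_cexp_mul_I_cpow hr ⟨by linarith [Real.pi_pos, hφ.1], hφ.2⟩]
  exact mul_cpow_of_im_nonpos_of_im_nonneg (sq_add_sq_mem_slitPlane hp a) him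
    (mul_ne_zero (by exact_mod_cast hr.ne') (Complex.exp_ne_zero _)) him' _

lemma one_sub_sq_mul_sq_add_sq_mul_eq {K : Type*} [Field K] [NeZero (2 : K)] {c s C S i u : K}
    (hcs : c ^ 2 + s ^ 2 = 1) (hCS : C ^ 2 + S ^ 2 = 1) (hi : i ^ 2 = -1) (hcC : c + C ≠ 0)
    (hu : 1 - u ≠ 0) :
    (1 - u) ^ 2 * ((1 - S / (c + C) * i + 2 * u / (1 - u)) ^ 2 + (s / (c + C)) ^ 2)
        * ((c + C) / 2 * (C + S * i))
      = 1 - 2 * c * (-(u * (C + S * i))) + (-(u * (C + S * i))) ^ 2 := by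
  have hnumerator : ((c + C) * (1 + u) - S * (1 - u) * i) ^ 2 + s ^ 2 * (1 - u) ^ 2
      = 2 * (c + C) * ((C - S * i) + 2 * u * c + u ^ 2 * (C + S * i)) := by
    linear_combination (1 - u) ^ 2 * hcs - (1 - u) ^ 2 * hCS + S ^ 2 * (1 - u) ^ 2 * hi
  have hclear : (1 - u) ^ 2 * ((1 - S / (c + C) * i + 2 * u / (1 - u)) ^ 2 + (s / (c + C)) ^ 2)
      = (((c + C) * (1 + u) - S * (1 - u) * i) ^ 2 + s ^ 2 * (1 - u) ^ 2) / (c + C) ^ 2 := by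
    field_simp
    ring
  have : (2 : K) ≠ 0 := NeZero.ne 2
  rw [hclear, hnumerator]
  field_simp
  linear_combination hCS - S ^ 2 * hi

lemma one_sub_sq_mul_sq_add_sq_mul_cexp {ϑ φ t : ℝ} (hD : Real.cos ϑ + Real.cos φ ≠ 0)
    (ht : t ≠ 1) :
    ((1 - t : ℝ) : ℂ) ^ 2
        * ((1 - (Real.sin φ / (Real.cos ϑ + Real.cos φ) : ℝ) * Complex.I
            + (2 * t / (1 - t) : ℝ)) ^ 2
          + ((Real.sin ϑ / (Real.cos ϑ + Real.cos φ) : ℝ) : ℂ) ^ 2)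
        * (((Real.cos ϑ + Real.cos φ) / 2 : ℝ) * Complex.exp (φ * Complex.I))
      = 1 - 2 * (Real.cos ϑ : ℝ) * (-(t * Complex.exp (φ * Complex.I)))
        + (-(t * Complex.exp (φ * Complex.I))) ^ 2 := by
  rw [Complex.exp_mul_I, ← Complex.ofReal_cos, ← Complex.ofReal_sin]
  simp only [Complex.ofReal_div, Complex.ofReal_add, Complex.ofReal_sub, Complex.ofReal_mul,
    Complex.ofReal_one, Complex.ofReal_ofNat]
  refine one_sub_sq_mul_sq_add_sq_mul_eq ?_ ?_ Complex.I_sq ?_ ?_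
  · exact_mod_cast Real.cos_sq_add_sin_sq ϑ
  · exact_mod_cast Real.cos_sq_add_sin_sq φ
  · exact_mod_cast hD
  · exact_mod_cast sub_ne_zero.2 ht.symm

lemma one_add_two_mul_div_one_sub_pos {t : ℝ} (ht : |t| < 1) : 0 < 1 + 2 * t / (1 - t) := by
  obtain ⟨ht₁, ht₂⟩ := abs_lt.1 ht
  have hsub : 0 < 1 - t := by linarith
  rw [show 1 + 2 * t / (1 - t) = (1 + t) / (1 - t) by field_simp; ring]
  exact div_pos (by linarith) hsub

lemma one_sub_two_mul_cos_mul_add_sq_cpow {ϑ φ t : ℝ} (hD : 0 < Real.cos ϑ + Real.cos φ)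
    (hφ : φ ∈ Icc 0 π) (ht : |t| < 1) (s : ℝ) :
    (1 - 2 * (Real.cos ϑ : ℝ) * (-(t * Complex.exp (φ * Complex.I)))
        + (-(t * Complex.exp (φ * Complex.I))) ^ 2) ^ (s : ℂ)
      = ((1 - (Real.sin φ / (Real.cos ϑ + Real.cos φ) : ℝ) * Complex.I
            + (2 * t / (1 - t) : ℝ)) ^ 2
          + ((Real.sin ϑ / (Real.cos ϑ + Real.cos φ) : ℝ) : ℂ) ^ 2) ^ (s : ℂ)
        * (((1 - t) ^ (2 * s) * ((Real.cos ϑ + Real.cos φ) / 2) ^ s : ℝ)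
          * Complex.exp ((s * φ : ℝ) * Complex.I)) := by
  have hsub : 0 < 1 - t := by linarith [(abs_lt.1 ht).2]
  have hb : 0 ≤ Real.sin φ / (Real.cos ϑ + Real.cos φ) :=
    div_nonneg (Real.sin_nonneg_of_mem_Icc hφ) hD.le
  have hhalf : 0 < (Real.cos ϑ + Real.cos φ) / 2 := half_pos hD
  have hreal : (1 - t) ^ (2 * s) * ((Real.cos ϑ + Real.cos φ) / 2) ^ s
      = ((1 - t) ^ 2 * ((Real.cos ϑ + Real.cos φ) / 2)) ^ s := by
    rw [Real.mul_rpow (by positivity) hhalf.le, ← Real.rpow_natCast, ← Real.rpow_mul hsub.le]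
    norm_num
  rw [← one_sub_sq_mul_sq_add_sq_mul_cexp hD.ne' (sub_pos.1 hsub).ne, hreal,
    ← sq_add_sq_mul_cpow _ _ _ (by positivity) hφ]
  · congr 1
    push_cast
    ring
  · simpa [-Complex.ofReal_div] using one_add_two_mul_div_one_sub_pos ht
  · simpa [-Complex.ofReal_div] using hb

lemma one_sub_rpow_mul_laplaceTransform_besselKernel {ϑ φ t : ℝ}
    (hD : 0 < Real.cos ϑ + Real.cos φ) (hφ : φ ∈ Icc 0 π) (ht : |t| < 1) {α : ℝ}
    (hα : -1 / 2 < α) :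
    ((1 - t) ^ (-(2 * α + 1)) : ℝ)
        * laplaceTransform (besselKernel α (Real.sin ϑ / (Real.cos ϑ + Real.cos φ)))
          (1 - (Real.sin φ / (Real.cos ϑ + Real.cos φ) : ℝ) * Complex.I + (2 * t / (1 - t) : ℝ))
      = (2 ^ (2 * α) / √π : ℝ) * ((((Real.cos ϑ + Real.cos φ) / 2) ^ (α + 1 / 2) : ℝ)
          * Complex.exp (((α + 1 / 2) * φ : ℝ) * Complex.I))
        * (Real.Gamma (α + 1 / 2)
          * (1 - 2 * (Real.cos ϑ : ℝ) * (-(t * Complex.exp (φ * Complex.I)))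
            + (-(t * Complex.exp (φ * Complex.I))) ^ 2) ^ (-(α + 1 / 2 : ℝ) : ℂ)) := by
  have hcancel := ofReal_rpow_mul_cexp_mul_neg (half_pos hD) φ (α + 1 / 2)
  rw [laplaceTransform_besselKernel _ hα
    (by simpa [-Complex.ofReal_div] using one_add_two_mul_div_one_sub_pos ht),
    Gamma_two_mul_add_one_div_Gamma hα, ← Complex.ofReal_neg,
    one_sub_two_mul_cos_mul_add_sq_cpow hD hφ ht, show 2 * -(α + 1 / 2) = -(2 * α + 1) by ring,
    show (-(α + 1 / 2) : ℂ) = (-(α + 1 / 2) : ℝ) by push_cast; rfl,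
    Complex.ofReal_mul (2 ^ (2 * α) / √π), Complex.ofReal_mul (_ ^ (-(2 * α + 1)))]
  set Q : ℂ := (_ + _) ^ ((-(α + 1 / 2) : ℝ) : ℂ)
  linear_combination (-((2 ^ (2 * α) / √π : ℝ) * Real.Gamma (α + 1 / 2)
    * ((1 - t) ^ (-(2 * α + 1)) : ℝ) * Q : ℂ)) * hcancel

lemma hasSum_gegenbauerCt_cos_mul_cexp (ϑ φ : ℝ) {l : ℝ} (hl : 0 < l) {t : ℝ} (ht : |t| < 1 / 3) :
    HasSum (fun n : ℕ => t ^ n • (((-1) ^ n * gegenbauerCt n l (Real.cos ϑ) : ℝ)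
        * Complex.exp ((n * φ : ℝ) * Complex.I)))
      (Real.Gamma l * (1 - 2 * (Real.cos ϑ : ℝ) * (-(t * Complex.exp (φ * Complex.I)))
        + (-(t * Complex.exp (φ * Complex.I))) ^ 2) ^ (-l : ℂ)) := by
  have hnorm : ‖-((t : ℂ) * Complex.exp (φ * Complex.I))‖ = |t| := by
    rw [norm_neg, norm_mul, Complex.norm_exp_ofReal_mul_I, Complex.norm_real, mul_one,
      Real.norm_eq_abs]
  refine (hasSum_gegenbauerCt_mul_pow hl ?_).congr_fun fun n => ?_
  · rw [norm_neg, norm_pow, norm_mul, norm_mul, hnorm, Complex.norm_real, Complex.norm_two,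
      Real.norm_eq_abs]
    have := mul_le_of_le_one_left (abs_nonneg t) (Real.abs_cos_le_one ϑ)
    nlinarith [abs_nonneg t]
  · rw [neg_pow (_ * _), mul_pow, ← Complex.exp_nat_mul, Complex.real_smul]
    push_cast
    ring_nf

lemma hasSum_laplaceTransform_laguerreL_mul_besselKernel (μ : ℕ) {ϑ φ t : ℝ}
    (hD : 0 < Real.cos ϑ + Real.cos φ) (hφ : φ ∈ Icc 0 π) (ht : |t| < 1 / 3) :
    HasSum (fun n => t ^ n • laplaceTransform (fun x => laguerreL n μ (2 * x)
          * besselKernel (μ / 2) (Real.sin ϑ / (Real.cos ϑ + Real.cos φ)) x)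
        (1 - (Real.sin φ / (Real.cos ϑ + Real.cos φ) : ℝ) * Complex.I))
      ((2 ^ (2 * ((μ : ℝ) / 2)) / √π : ℝ)
          * ((((Real.cos ϑ + Real.cos φ) / 2) ^ ((μ : ℝ) / 2 + 1 / 2) : ℝ)
            * Complex.exp ((((μ : ℝ) / 2 + 1 / 2) * φ : ℝ) * Complex.I))
        * (Real.Gamma ((μ : ℝ) / 2 + 1 / 2)
          * (1 - 2 * (Real.cos ϑ : ℝ) * (-(t * Complex.exp (φ * Complex.I)))
            + (-(t * Complex.exp (φ * Complex.I))) ^ 2)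
              ^ (-((μ : ℝ) / 2 + 1 / 2 : ℝ) : ℂ))) := by
  have hα : -1 / 2 < (μ : ℝ) / 2 := by linarith [(μ.cast_nonneg : (0 : ℝ) ≤ μ)]
  have ht_one : |t| < 1 := ht.trans (by norm_num)
  have hpow : (1 - t) ^ (-(2 * ((μ : ℝ) / 2) + 1)) = 1 / (1 - t) ^ (μ + 1) := by
    rw [mul_div_cancel₀ _ two_ne_zero, Real.rpow_neg (by linarith [(abs_lt.1 ht_one).2]),
      ← Nat.cast_succ, Real.rpow_natCast, one_div]
  have hre : 2 * |t| / (1 - |t|)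
      < (1 - (Real.sin φ / (Real.cos ϑ + Real.cos φ) : ℝ) * Complex.I).re := by
    rw [div_lt_iff₀ (by linarith), Complex.sub_re, Complex.re_ofReal_mul, Complex.I_re,
      Complex.one_re]
    linarith
  rw [← one_sub_rpow_mul_laplaceTransform_besselKernel hD hφ ht_one hα, hpow]
  refine (hasSum_laplaceTransform_laguerreL_mul μ (laplaceIntegrable_besselKernel _ hα)
    zero_le_two ht_one hre).congr_fun fun n => ?_
  rw [Complex.real_smul, Complex.ofReal_pow, mul_comm]

theorem laplaceTransform_laguerreL_mul_besselKernel (μ j : ℕ) {ϑ φ : ℝ}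
    (hD : 0 < Real.cos ϑ + Real.cos φ) (hφ : φ ∈ Icc 0 π) :
    laplaceTransform (fun x => laguerreL j μ (2 * x)
          * besselKernel (μ / 2) (Real.sin ϑ / (Real.cos ϑ + Real.cos φ)) x)
        (1 - (Real.sin φ / (Real.cos ϑ + Real.cos φ) : ℝ) * Complex.I)
      = (2 ^ (2 * ((μ : ℝ) / 2)) / √π : ℝ)
          * ((((Real.cos ϑ + Real.cos φ) / 2) ^ ((μ : ℝ) / 2 + 1 / 2) : ℝ)
            * Complex.exp ((((μ : ℝ) / 2 + 1 / 2) * φ : ℝ) * Complex.I))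
        * (((-1) ^ j * gegenbauerCt j (μ / 2 + 1 / 2) (Real.cos ϑ) : ℝ)
          * Complex.exp ((j * φ : ℝ) * Complex.I)) := by
  have hsmall : ∀ᶠ t : ℝ in nhds 0, |t| < 1 / 3 :=
    (continuous_abs.tendsto' 0 0 abs_zero).eventually_lt_const (by norm_num)
  have hgegenbauer (t : ℝ) (ht : |t| < 1 / 3) :=
    (hasSum_gegenbauerCt_cos_mul_cexp ϑ φ (l := (μ : ℝ) / 2 + 1 / 2) (by positivity) ht).mul_left
      ((2 ^ (2 * ((μ : ℝ) / 2)) / √π : ℝ)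
        * ((((Real.cos ϑ + Real.cos φ) / 2) ^ ((μ : ℝ) / 2 + 1 / 2) : ℝ)
          * Complex.exp ((((μ : ℝ) / 2 + 1 / 2) * φ : ℝ) * Complex.I)))
  simp only [mul_smul_comm] at hgegenbauer
  exact congrFun (eq_of_eventually_hasSum_pow_smul
    (hsmall.mono fun _ => hasSum_laplaceTransform_laguerreL_mul_besselKernel μ hD hφ)
    (hsmall.mono hgegenbauer)) j

theorem corollaryC_sin_general (μ j : ℕ) (ϑ φ : ℝ) (hφ : φ ∈ Set.Icc (0 : ℝ) Real.pi)
    (hpos : Real.cos ϑ + Real.cos φ > 0) :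
    ∫ x in Set.Ioi (0 : ℝ),
        laguerreL j μ (2 * x)
          * besselJt ((μ : ℝ) / 2) (Real.sin ϑ / (Real.cos ϑ + Real.cos φ) * x)
          * Real.sin (Real.sin φ / (Real.cos ϑ + Real.cos φ) * x)
          * x ^ (μ : ℝ) * Real.exp (-x)
      = (-1) ^ j * ((2 : ℝ) ^ μ / Real.sqrt Real.pi)
          * ((Real.cos ϑ + Real.cos φ) / 2) ^ (((μ : ℝ) + 1) / 2)
          * Real.sin ((j + ((μ : ℝ) + 1) / 2) * φ)
          * gegenbauerCt j (((μ : ℝ) + 1) / 2) (Real.cos ϑ) := by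
  have hα : -1 / 2 < (μ : ℝ) / 2 := by linarith [(μ.cast_nonneg : (0 : ℝ) ≤ μ)]
  have hμ : 2 * ((μ : ℝ) / 2) = μ := mul_div_cancel₀ _ two_ne_zero
  have hlaplace := integral_mul_sin_mul_exp_neg ((laplaceIntegrable_besselKernel
    (Real.sin ϑ / (Real.cos ϑ + Real.cos φ)) hα).laguerreL_mul j μ 2)
    (Real.sin φ / (Real.cos ϑ + Real.cos φ))
  rw [laplaceTransform_laguerreL_mul_besselKernel μ j hpos hφ] at hlaplace
  simp only [besselKernel, hμ, Real.rpow_natCast] at hlaplace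
  rw [mul_assoc (Complex.ofReal _), ofReal_mul_cexp_mul_ofReal_mul_cexp, Complex.im_ofReal_mul,
    Complex.im_ofReal_mul, Complex.exp_ofReal_mul_I_im, ← add_mul, add_comm (_ + _) (j : ℝ)]
    at hlaplace
  simp only [add_div (μ : ℝ), Real.rpow_natCast]
  calc _ = _ := integral_congr_ae (.of_forall fun x => by ring)
    _ = _ := hlaplace
    _ = _ := by ring

/-- **Corollary C, sine version.** -/
theorem corollaryC_sin (μ : ℕ) (hμ : Odd μ) (hμ1 : 1 ≤ μ) (j : ℕ)
    (ϑ φ : ℝ) (hϑ : ϑ ∈ Set.Icc (0 : ℝ) Real.pi) (hφ : φ ∈ Set.Icc (0 : ℝ) Real.pi)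
    (hpos : Real.cos ϑ + Real.cos φ > 0) :
    ∫ x in Set.Ioi (0 : ℝ),
        laguerreL j μ (2 * x)
          * besselJt ((μ : ℝ) / 2) (Real.sin ϑ / (Real.cos ϑ + Real.cos φ) * x)
          * Real.sin (Real.sin φ / (Real.cos ϑ + Real.cos φ) * x)
          * x ^ (μ : ℝ) * Real.exp (-x)
      = (-1) ^ j * ((2 : ℝ) ^ μ / Real.sqrt Real.pi)
          * ((Real.cos ϑ + Real.cos φ) / 2) ^ (((μ : ℝ) + 1) / 2)
          * Real.sin ((j + ((μ : ℝ) + 1) / 2) * φ)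
          * gegenbauerCt j (((μ : ℝ) + 1) / 2) (Real.cos ϑ) :=
  corollaryC_sin_general μ j ϑ φ hφ hpos
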